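/- (Frenkel–Turaev summation.) Let s, a, b, c, d, e ∈ ℂ satisfy a + b + c + d + e = δ + 2s and e = −Nδ for some N ∈ ℕ. Then, for generic parameters (all brackets appearing in denominators nonzero): {}_8E_7(s; a, b, c, d, e) = ( [δ+s]_N [δ+s−b−c]_N [δ+s−b−d]_N [δ+s−c−d]_N ) / ( [δ+s−b]_N [δ+s−c]_N [δ+s−d]_N [δ+s−b−c−d]_N ). -/

import Mathlib

/-!
The summation is an elliptic binomial theorem in disguise. With `[γ±z]_k = [γ+z]_k [γ-z]_k`, one
has an expansion
`[α+β]_N [γ±z]_N = ∑_{k+m=N} c(k,m) [α±z]_k [β±z]_m`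
with explicit product coefficients `c(k,m)` (`expCoeff`, `expansion`). It is proved by induction
on `N`: the Riemann relation expresses `[γ+Nδ±z]` through `[α+kδ±z]` and `[β+mδ±z]`, which gives a
Pascal-type recurrence, and the product formula for `c(k,m)` satisfies this recurrence by another
instance of the Riemann relation (`expCoeff_succ_succ`).

Choosing `α+z = b`, `α-z = c`, `β = α-s-Nδ`, `γ = δ+s-α-d` and reversing shifted factorials, the
expansion becomes the Frenkel–Turaev sum term by term (`term_eq`, `generic_sum`). This requires
`[s+jδ] ≠ 0` for `0 ≤ j ≤ 2N`, although the formula itself makes sense for some `s` violating it.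
Those `s` are reached by continuity: the zeros of the holomorphic function `[·]` are isolated, and
for fixed `b, c, d, N`, with `a` determined by the balancing condition, both sides are continuous
at `s`.
-/

open Finset

/-- Shifted factorial `[x]_k = [x][x+δ]⋯[x+(k-1)δ]` with respect to the bracket `f`. -/
noncomputable def sf (f : ℂ → ℂ) (δ : ℂ) (x : ℂ) (k : ℕ) : ℂ :=
  ∏ i ∈ Finset.range k, f (x + (i : ℂ) * δ)

/-- Difference product `Δ(x) = ∏_{i<j} [x_i - x_j]`. -/
noncomputable def Del (f : ℂ → ℂ) {m : ℕ} (x : Fin m → ℂ) : ℂ :=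
  ∏ i : Fin m, ∏ j ∈ Finset.univ.filter (fun j => i < j), f (x i - x j)

/-- The multiple hypergeometric series `Φ^{m,n}_N(a; x | b; c)`. -/
noncomputable def Phi (f : ℂ → ℂ) (δ : ℂ) {m n : ℕ} (a x : Fin m → ℂ)
    (b c : Fin n → ℂ) (N : ℕ) : ℂ :=
  ∑ μ ∈ Finset.Nat.antidiagonalTuple m N,
    (Del f (fun i => x i + (μ i : ℂ) * δ) / Del f x)
      * (∏ i, ∏ j, sf f δ (x i - x j + a j) (μ i) / sf f δ (x i - x j + δ) (μ i))
      * (∏ i, ∏ k, sf f δ (x i + b k) (μ i) / sf f δ (x i + c k) (μ i))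

/-- The `μ`-th summand of the very well-poised series `E^{m,n}(a; x | s; u; v)`. -/
noncomputable def Eterm (f : ℂ → ℂ) (δ : ℂ) {m n : ℕ} (a x : Fin m → ℂ) (s : ℂ)
    (u v : Fin n → ℂ) (μ : Fin m → ℕ) : ℂ :=
  (Del f (fun i => x i + (μ i : ℂ) * δ) / Del f x)
    * (∏ i, f (x i + s + (((∑ j, μ j) + μ i : ℕ) : ℂ) * δ) / f (x i + s))
    * (∏ j, (sf f δ (s + x j) (∑ i, μ i) / sf f δ (δ + s + x j - a j) (∑ i, μ i))
        * ∏ i, sf f δ (x i - x j + a j) (μ i) / sf f δ (x i - x j + δ) (μ i))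
    * (∏ k, (sf f δ (v k) (∑ i, μ i) / sf f δ (δ + s - u k) (∑ i, μ i))
        * ∏ i, sf f δ (x i + u k) (μ i) / sf f δ (x i + δ + s - v k) (μ i))

/-- The very well-poised multiple series `E^{m,n}(a; x | s; u; v)`. -/
noncomputable def Evw (f : ℂ → ℂ) (δ : ℂ) {m n : ℕ} (a x : Fin m → ℂ) (s : ℂ)
    (u v : Fin n → ℂ) : ℂ :=
  ∑' μ : Fin m → ℕ, Eterm f δ a x s u v μ

/-- The one-dimensional very well-poised series `_{r+3}E_{r+2}(s; u_1, …, u_r)`. -/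
noncomputable def E1 (f : ℂ → ℂ) (δ : ℂ) {r : ℕ} (s : ℂ) (u : Fin r → ℂ) : ℂ :=
  ∑' k : ℕ, (f (s + 2 * (k : ℂ) * δ) / f s) * (sf f δ s k / sf f δ δ k)
    * ∏ i, sf f δ (u i) k / sf f δ (δ + s - u i) k

/-! ### Shifted factorials -/

lemma sf_zero (f : ℂ → ℂ) (δ x : ℂ) : sf f δ x 0 = 1 := by simp [sf]

lemma sf_succ (f : ℂ → ℂ) (δ x : ℂ) (k : ℕ) :
    sf f δ x (k + 1) = sf f δ x k * f (x + k * δ) := by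
  simp [sf, Finset.prod_range_succ]

lemma sf_succ_left (f : ℂ → ℂ) (δ x : ℂ) (k : ℕ) :
    sf f δ x (k + 1) = f x * sf f δ (x + δ) k := by
  simp only [sf, Finset.prod_range_succ']
  rw [mul_comm]
  congr 1
  · simp
  · refine Finset.prod_congr rfl fun i _ => ?_
    congr 1; push_cast; ring

lemma sf_add (f : ℂ → ℂ) (δ x : ℂ) (k m : ℕ) :
    sf f δ x (k + m) = sf f δ x k * sf f δ (x + k * δ) m := by
  simp only [sf, Finset.prod_range_add]
  congr 1
  refine Finset.prod_congr rfl fun i _ => ?_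
  congr 1; push_cast; ring

/-- Reversal of a shifted factorial: `[x]_k = (-1)^k [(1-k)δ - x]_k`. -/
lemma sf_reflect (f : ℂ → ℂ) (hodd : ∀ t : ℂ, f (-t) = -f t) (δ x y : ℂ) (k : ℕ)
    (h : x + y = δ - k * δ) : sf f δ x k = (-1) ^ k * sf f δ y k := by
  induction k generalizing x y with
  | zero => simp [sf_zero]
  | succ k ih =>
    push_cast at h
    rw [sf_succ, sf_succ_left, ih x (y + δ) (by linear_combination h),
      show x + k * δ = -y by linear_combination h, hodd]
    ring

/-! ### The elliptic binomial theorem -/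

/-- The coefficient of `[α±z]_k [β±z]_m` in the expansion of `[α+β]_{k+m} [γ±z]_{k+m}`
(see `expansion`), an elliptic analogue of the binomial coefficient. It is symmetric under
`(α, k) ↔ (β, m)`. -/
noncomputable def expCoeff (f : ℂ → ℂ) (δ α β γ : ℂ) (k m : ℕ) : ℂ :=
  sf f δ δ (k + m) / (sf f δ δ k * sf f δ δ m)
    * (sf f δ (γ - β) k * sf f δ (γ - α) m
      * sf f δ (γ + β + m * δ) k * sf f δ (γ + α + k * δ) m)
    / (sf f δ (α - β - m * δ) k * sf f δ (β - α - k * δ) m)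

lemma expCoeff_symm (f : ℂ → ℂ) (δ α β γ : ℂ) (k m : ℕ) :
    expCoeff f δ α β γ k m = expCoeff f δ β α γ m k := by
  unfold expCoeff
  rw [add_comm m k]
  ring

/-- The multiplier by which `expCoeff k m` contributes to `expCoeff (k+1) m` in the Pascal-type
recurrence; exchanging `(α, k)` and `(β, m)` gives the multiplier towards `expCoeff k (m+1)`. -/
noncomputable def stepCoeff (f : ℂ → ℂ) (δ α β γ : ℂ) (k m : ℕ) : ℂ :=
  f (γ - β + k * δ) * f (γ + β + (2 * m + k) * δ) / f (α - β + (k - m) * δ)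

lemma sf_ne {f : ℂ → ℂ} {δ x : ℂ} {k : ℕ} (h : ∀ i < k, f (x + i * δ) ≠ 0) : sf f δ x k ≠ 0 :=
  Finset.prod_ne_zero_iff.2 fun i hi => h i (Finset.mem_range.1 hi)

lemma sf_delta_ne {f : ℂ → ℂ} {δ : ℂ} (hδ : ∀ k : ℤ, k ≠ 0 → f ((k : ℂ) * δ) ≠ 0) (k : ℕ) :
    sf f δ δ k ≠ 0 :=
  sf_ne fun i _ => by
    have := hδ (i + 1) (by omega)
    push_cast at this
    rwa [show δ + i * δ = (i + 1) * δ by ring]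

/-- The recurrence on the boundary `m = 0` of the triangle. -/
lemma expCoeff_zero_right {f : ℂ → ℂ} {δ : ℂ} (hδ : ∀ k : ℤ, k ≠ 0 → f ((k : ℂ) * δ) ≠ 0)
    (α β γ : ℂ) (k : ℕ) :
    expCoeff f δ α β γ (k + 1) 0 = expCoeff f δ α β γ k 0 * stepCoeff f δ α β γ k 0 := by
  have h1 := sf_delta_ne hδ k
  have h2 := sf_delta_ne hδ (k + 1)
  simp only [expCoeff, stepCoeff, sf_zero, add_zero, Nat.cast_zero, zero_mul, sub_zero, mul_one,
    mul_zero, div_self h1, div_self h2, zero_add]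
  simp only [sf_succ, div_eq_mul_inv, mul_inv]
  ring

/-- The Pascal-type recurrence in the interior of the triangle. After cancelling common factors it
is a single instance of the Riemann relation. -/
lemma expCoeff_succ_succ {f : ℂ → ℂ} {δ : ℂ} (hodd : ∀ t : ℂ, f (-t) = -f t)
    (hRiem : ∀ x y u v : ℂ,
      f (x + y) * f (x - y) * f (u + v) * f (u - v) =
        f (x + u) * f (x - u) * f (y + v) * f (y - v)
          - f (x + v) * f (x - v) * f (y + u) * f (y - u))
    (hδ : ∀ k : ℤ, k ≠ 0 → f ((k : ℂ) * δ) ≠ 0) (α β γ : ℂ) (k m : ℕ)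
    (hg : ∀ j : ℤ, |j| ≤ k + m + 2 → f (α - β + j * δ) ≠ 0) :
    expCoeff f δ α β γ (k + 1) (m + 1) =
      expCoeff f δ α β γ k (m + 1) * stepCoeff f δ α β γ k (m + 1)
        + expCoeff f δ α β γ (k + 1) m * stepCoeff f δ β α γ m (k + 1) := by
  have hg' : ∀ j : ℤ, |j| ≤ k + m + 2 → f (β - α + j * δ) ≠ 0 := fun j hj => by
    have := hg (-j) (by simpa using hj)
    rw [show β - α + j * δ = -(α - β + ((-j : ℤ) : ℂ) * δ) by push_cast; ring, hodd]
    exact neg_ne_zero.2 this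
  have hk := sf_delta_ne hδ k
  have hm := sf_delta_ne hδ m
  have hk1 : f (δ + k * δ) ≠ 0 := by
    have := hδ (k + 1) (by omega)
    push_cast at this
    rwa [show δ + k * δ = (k + 1) * δ by ring]
  have hm1 : f (δ + m * δ) ≠ 0 := by
    have := hδ (m + 1) (by omega)
    push_cast at this
    rwa [show δ + m * δ = (m + 1) * δ by ring]
  have hW : sf f δ (α - β - m * δ) k ≠ 0 := sf_ne fun i hi => by
    have := hg (i - m) (by rw [abs_le]; omega)
    push_cast at this
    rwa [show α - β - m * δ + i * δ = α - β + (i - m) * δ by ring]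
  have hZ : sf f δ (β - α - k * δ) m ≠ 0 := sf_ne fun i hi => by
    have := hg' (i - k) (by rw [abs_le]; omega)
    push_cast at this
    rwa [show β - α - k * δ + i * δ = β - α + (i - k) * δ by ring]
  have hp : f (α - β - (m + 1) * δ) ≠ 0 := by
    have := hg (-(m + 1)) (by rw [abs_le]; omega)
    push_cast at this
    rwa [show α - β - (m + 1) * δ = α - β + -(m + 1) * δ by ring]
  have hq : f (β - α - (k + 1) * δ) ≠ 0 := by
    have := hg' (-(k + 1)) (by rw [abs_le]; omega)
    push_cast at this
    rwa [show β - α - (k + 1) * δ = β - α + -(k + 1) * δ by ring]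
  have hr : f (α - β + (k - m) * δ) ≠ 0 := by
    have := hg (k - m) (by rw [abs_le]; omega)
    push_cast at this
    exact this
  have hr2 : f (α - β + (k - (m + 1)) * δ) ≠ 0 := by
    have := hg (k - (m + 1)) (by rw [abs_le]; omega)
    push_cast at this
    exact this
  have hr3 : f (β - α + (m - (k + 1)) * δ) ≠ 0 := by
    have := hg' (m - (k + 1)) (by rw [abs_le]; omega)
    push_cast at this
    exact this
  have hneg : f (β - α - k * δ + m * δ) = -f (α - β + (k - m) * δ) := by
    rw [← hodd]; congr 1; ring
  -- all shifted factorials are expressed through those shared by the three coefficients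
  have w1 : sf f δ (α - β - (m + 1) * δ) (k + 1)
      = f (α - β - (m + 1) * δ) * sf f δ (α - β - m * δ) k := by
    rw [sf_succ_left]; congr 2; ring
  have w2 : sf f δ (α - β - (m + 1) * δ) k
      = f (α - β - (m + 1) * δ) * sf f δ (α - β - m * δ) k / f (α - β + (k - (m + 1)) * δ) := by
    rw [eq_div_iff hr2, ← w1, sf_succ]; congr 2; ring
  have w3 : sf f δ (α - β - m * δ) (k + 1)
      = sf f δ (α - β - m * δ) k * f (α - β + (k - m) * δ) := by
    rw [sf_succ]; congr 2; ring
  have z1 : sf f δ (β - α - (k + 1) * δ) (m + 1)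
      = f (β - α - (k + 1) * δ) * sf f δ (β - α - k * δ) m := by
    rw [sf_succ_left]; congr 2; ring
  have z2 : sf f δ (β - α - (k + 1) * δ) m
      = f (β - α - (k + 1) * δ) * sf f δ (β - α - k * δ) m / f (β - α + (m - (k + 1)) * δ) := by
    rw [eq_div_iff hr3, ← z1, sf_succ]; congr 2; ring
  have z3 : sf f δ (β - α - k * δ) (m + 1)
      = sf f δ (β - α - k * δ) m * -f (α - β + (k - m) * δ) := by
    rw [sf_succ, hneg]
  have u1 : sf f δ (γ + β + (m + 1) * δ) (k + 1)
      = sf f δ (γ + β + (m + 1) * δ) k * f (γ + β + (k + m + 1) * δ) := by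
    rw [sf_succ]; congr 2; ring
  have u2 : sf f δ (γ + β + m * δ) (k + 1)
      = f (γ + β + m * δ) * sf f δ (γ + β + (m + 1) * δ) k := by
    rw [sf_succ_left]; congr 2; ring
  have v1 : sf f δ (γ + α + (k + 1) * δ) (m + 1)
      = sf f δ (γ + α + (k + 1) * δ) m * f (γ + α + (k + m + 1) * δ) := by
    rw [sf_succ]; congr 2; ring
  have v2 : sf f δ (γ + α + k * δ) (m + 1)
      = f (γ + α + k * δ) * sf f δ (γ + α + (k + 1) * δ) m := by
    rw [sf_succ_left]; congr 2; ring
  have d1 : sf f δ δ (k + 1 + (m + 1)) = sf f δ δ (k + m + 1) * f ((k + m + 2) * δ) := by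
    rw [show k + 1 + (m + 1) = k + m + 1 + 1 by ring, sf_succ]; congr 2; push_cast; ring
  -- the arguments are chosen so that `x ± y` and `u ± v` are the arguments of the brackets
  -- `[γ+α+(k+m+1)δ]`, `[γ+β+(k+m+1)δ]`, `[(k+m+2)δ]`, `[α-β+(k-m)δ]`
  have key := hRiem (γ + (α + β) / 2 + (k + m + 1) * δ) ((α - β) / 2)
    ((α - β) / 2 + (k + 1) * δ) ((m + 1) * δ - (α - β) / 2)
  rw [show γ + (α + β) / 2 + (k + m + 1) * δ + (α - β) / 2 = γ + α + (k + m + 1) * δ by ring,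
    show γ + (α + β) / 2 + (k + m + 1) * δ - (α - β) / 2 = γ + β + (k + m + 1) * δ by ring,
    show (α - β) / 2 + (k + 1) * δ + ((m + 1) * δ - (α - β) / 2) = (k + m + 2) * δ by ring,
    show (α - β) / 2 + (k + 1) * δ - ((m + 1) * δ - (α - β) / 2) = α - β + (k - m) * δ by ring,
    show γ + (α + β) / 2 + (k + m + 1) * δ + ((α - β) / 2 + (k + 1) * δ)
      = γ + α + (2 * (k + 1) + m) * δ by ring,
    show γ + (α + β) / 2 + (k + m + 1) * δ - ((α - β) / 2 + (k + 1) * δ) = γ + β + m * δ by ring,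
    show (α - β) / 2 + ((m + 1) * δ - (α - β) / 2) = δ + m * δ by ring,
    show (α - β) / 2 - ((m + 1) * δ - (α - β) / 2) = α - β - (m + 1) * δ by ring,
    show γ + (α + β) / 2 + (k + m + 1) * δ + ((m + 1) * δ - (α - β) / 2)
      = γ + β + (2 * (m + 1) + k) * δ by ring,
    show γ + (α + β) / 2 + (k + m + 1) * δ - ((m + 1) * δ - (α - β) / 2) = γ + α + k * δ by ring,
    show (α - β) / 2 + ((α - β) / 2 + (k + 1) * δ) = -(β - α - (k + 1) * δ) by ring,
    show (α - β) / 2 - ((α - β) / 2 + (k + 1) * δ) = -(δ + k * δ) by ring, hodd, hodd] at key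
  unfold expCoeff stepCoeff
  push_cast
  rw [show k + (m + 1) = k + m + 1 by ring, show k + 1 + m = k + m + 1 by ring, d1, w1, w2, w3,
    z1, z2, z3, u1, u2, v1, v2, sf_succ f δ δ k, sf_succ f δ δ m, sf_succ f δ (γ - β) k,
    sf_succ f δ (γ - α) m]
  generalize f (α - β + (k - m) * δ) = r at *
  generalize f (α - β + (k - (m + 1)) * δ) = r2 at *
  generalize f (β - α + (m - (k + 1)) * δ) = r3 at *
  generalize f (α - β - (m + 1) * δ) = p at *
  generalize f (β - α - (k + 1) * δ) = q at *
  generalize f (δ + k * δ) = k1 at *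
  generalize f (δ + m * δ) = m1 at *
  generalize sf f δ (α - β - m * δ) k = W at *
  generalize sf f δ (β - α - k * δ) m = Z at *
  generalize sf f δ δ k = dk at *
  generalize sf f δ δ m = dm at *
  generalize sf f δ δ (k + m + 1) = dn at *
  generalize f ((k + m + 2) * δ) = dn1 at *
  generalize f (γ + α + (k + m + 1) * δ) = g1 at *
  generalize f (γ + β + (k + m + 1) * δ) = g2 at *
  generalize f (γ + α + (2 * (k + 1) + m) * δ) = g3 at *
  generalize f (γ + β + (2 * (m + 1) + k) * δ) = g4 at *
  generalize f (γ + β + m * δ) = g5 at *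
  generalize f (γ + α + k * δ) = g6 at *
  generalize f (γ - β + k * δ) = g7 at *
  generalize f (γ - α + m * δ) = g8 at *
  generalize sf f δ (γ + β + (m + 1) * δ) k = U at *
  generalize sf f δ (γ + α + (k + 1) * δ) m = V at *
  generalize sf f δ (γ - β) k = g9 at *
  generalize sf f δ (γ - α) m = g10 at *
  clear w1 w2 w3 z1 z2 z3 u1 u2 v1 v2 d1 hneg hg hg' hRiem hδ hodd
  field_simp
  linear_combination (dn * U * V * g7 * g8 * g9 * g10) * key

/-- Elliptic binomial theorem: the expansion of `[α+β]_N [γ+z]_N [γ-z]_N` in the products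
`[α±z]_k [β±z]_{N-k}`. For the step from `N` to `N + 1`, the Riemann relation writes
`[γ+Nδ±z]` as a combination of `[α+kδ±z]` and `[β+(N-k)δ±z]`. Multiplying through by `[α+β]_N`
leaves `[α-β+jδ]` as the only denominators besides `[jδ]`. -/
theorem expansion {f : ℂ → ℂ} {δ : ℂ} (hodd : ∀ t : ℂ, f (-t) = -f t)
    (hRiem : ∀ x y u v : ℂ,
      f (x + y) * f (x - y) * f (u + v) * f (u - v) =
        f (x + u) * f (x - u) * f (y + v) * f (y - v)
          - f (x + v) * f (x - v) * f (y + u) * f (y - u))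
    (hδ : ∀ k : ℤ, k ≠ 0 → f ((k : ℂ) * δ) ≠ 0) (α β γ z : ℂ) (N : ℕ)
    (hg : ∀ j : ℤ, |j| ≤ N → f (α - β + j * δ) ≠ 0) :
    sf f δ (α + β) N * sf f δ (γ + z) N * sf f δ (γ - z) N =
      ∑ p ∈ antidiagonal N, expCoeff f δ α β γ p.1 p.2
        * (sf f δ (α + z) p.1 * sf f δ (α - z) p.1)
        * (sf f δ (β + z) p.2 * sf f δ (β - z) p.2) := by
  induction N with
  | zero => simp [sf_zero, expCoeff]
  | succ N ih =>
    set H : ℕ → ℂ := fun k => sf f δ (α + z) k * sf f δ (α - z) k with hH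
    set K : ℕ → ℂ := fun k => sf f δ (β + z) k * sf f δ (β - z) k with hK
    -- the contributions of `expCoeff (k-1) m` and `expCoeff k (m-1)` to `expCoeff k m`
    let X : ℕ → ℕ → ℂ := fun k m =>
      Nat.casesOn k 0 fun k => expCoeff f δ α β γ k m * stepCoeff f δ α β γ k m
    let Y : ℕ → ℕ → ℂ := fun k m =>
      Nat.casesOn m 0 fun m => expCoeff f δ α β γ k m * stepCoeff f δ β α γ m k
    have hD : ∀ p ∈ antidiagonal (N + 1), expCoeff f δ α β γ p.1 p.2 = X p.1 p.2 + Y p.1 p.2 := by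
      rintro ⟨k, m⟩ hp
      rw [HasAntidiagonal.mem_antidiagonal] at hp
      dsimp only at hp ⊢
      rcases k with _ | k <;> rcases m with _ | m
      · omega
      · change _ = 0 + expCoeff f δ α β γ 0 m * stepCoeff f δ β α γ m 0
        rw [zero_add, expCoeff_symm, expCoeff_zero_right hδ, expCoeff_symm f δ β α]
      · change _ = expCoeff f δ α β γ k 0 * stepCoeff f δ α β γ k 0 + 0
        rw [add_zero, expCoeff_zero_right hδ]
      · refine expCoeff_succ_succ hodd hRiem hδ α β γ k m fun j hj => hg j ?_
        push_cast
        omega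
    have e1 : ∑ p ∈ antidiagonal (N + 1), X p.1 p.2 * H p.1 * K p.2
        = ∑ p ∈ antidiagonal N,
          expCoeff f δ α β γ p.1 p.2 * stepCoeff f δ α β γ p.1 p.2 * H (p.1 + 1) * K p.2 := by
      rw [Finset.Nat.sum_antidiagonal_succ]
      simp [X]
    have e2 : ∑ p ∈ antidiagonal (N + 1), Y p.1 p.2 * H p.1 * K p.2
        = ∑ p ∈ antidiagonal N,
          expCoeff f δ α β γ p.1 p.2 * stepCoeff f δ β α γ p.2 p.1 * H p.1 * K (p.2 + 1) := by
      rw [Finset.Nat.sum_antidiagonal_succ']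
      simp [Y]
    have e3 : ∑ p ∈ antidiagonal (N + 1), expCoeff f δ α β γ p.1 p.2 * H p.1 * K p.2
        = ∑ p ∈ antidiagonal (N + 1), X p.1 p.2 * H p.1 * K p.2
          + ∑ p ∈ antidiagonal (N + 1), Y p.1 p.2 * H p.1 * K p.2 := by
      rw [← Finset.sum_add_distrib]
      refine Finset.sum_congr rfl fun p hp => ?_
      rw [hD p hp]; ring
    have ih' := ih fun j hj => hg j (by push_cast; omega)
    calc sf f δ (α + β) (N + 1) * sf f δ (γ + z) (N + 1) * sf f δ (γ - z) (N + 1)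
        = (sf f δ (α + β) N * sf f δ (γ + z) N * sf f δ (γ - z) N)
          * (f (α + β + N * δ) * f (γ + z + N * δ) * f (γ - z + N * δ)) := by
          simp only [sf_succ]; ring
      _ = ∑ p ∈ antidiagonal (N + 1), expCoeff f δ α β γ p.1 p.2 * H p.1 * K p.2 := by
          rw [e3, e1, e2, ih', Finset.sum_mul, ← Finset.sum_add_distrib]
          refine Finset.sum_congr rfl fun ⟨k, m⟩ hp => ?_
          rw [HasAntidiagonal.mem_antidiagonal] at hp
          dsimp only at hp ⊢
          subst hp
          have hr : f (α - β + (k - m) * δ) ≠ 0 := by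
            have := hg (k - m) (by rw [abs_le]; push_cast; omega)
            push_cast at this
            exact this
          have R := hRiem (α + k * δ) (β + m * δ) (γ + (k + m) * δ) z
          rw [show α + k * δ + (β + m * δ) = α + β + (k + m) * δ by ring,
            show α + k * δ - (β + m * δ) = α - β + (k - m) * δ by ring,
            show γ + (k + m) * δ + z = γ + z + (k + m) * δ by ring,
            show γ + (k + m) * δ - z = γ - z + (k + m) * δ by ring,
            show α + k * δ + (γ + (k + m) * δ) = γ + α + (2 * k + m) * δ by ring,
            show α + k * δ - (γ + (k + m) * δ) = -(γ - α + m * δ) by ring,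
            show β + m * δ + (γ + (k + m) * δ) = γ + β + (2 * m + k) * δ by ring,
            show β + m * δ - (γ + (k + m) * δ) = -(γ - β + k * δ) by ring,
            show β + m * δ + z = β + z + m * δ by ring,
            show β + m * δ - z = β - z + m * δ by ring,
            show α + k * δ + z = α + z + k * δ by ring,
            show α + k * δ - z = α - z + k * δ by ring, hodd, hodd] at R
          have hA : f (β - α + (m - k) * δ) = -f (α - β + (k - m) * δ) := by
            rw [← hodd]; congr 1; ring
          simp only [hH, hK, sf_succ, stepCoeff, hA]
          push_cast
          generalize f (α - β + (k - m) * δ) = r at *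
          generalize f (γ + α + (2 * k + m) * δ) = g1 at *
          generalize f (γ + β + (2 * m + k) * δ) = g2 at *
          generalize f (α + β + (k + m) * δ) = g3 at *
          generalize f (γ + z + (k + m) * δ) = g4 at *
          generalize f (γ - z + (k + m) * δ) = g5 at *
          generalize f (γ - α + m * δ) = g6 at *
          generalize f (β + z + m * δ) = g7 at *
          generalize f (β - z + m * δ) = g8 at *
          field_simp
          linear_combination (expCoeff f δ α β γ k m * sf f δ (α + z) k * sf f δ (α - z) k *
            sf f δ (β + z) m * sf f δ (β - z) m) * R

/-! ### The summation formula for generic `s` -/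

/-- The left side is the `(k, m)` term of `expansion` at `α = (b+c)/2`, `z = (b-c)/2`,
`β = α - s - Nδ`, `γ = δ + s - α - d` with `N = k + m`; it is the `k`-th term of the very
well-poised series up to a factor depending only on `N`. -/
lemma term_eq {f : ℂ → ℂ} {δ : ℂ} (hodd : ∀ t : ℂ, f (-t) = -f t)
    (hδ : ∀ k : ℤ, k ≠ 0 → f ((k : ℂ) * δ) ≠ 0) (k m : ℕ) (s a b c d : ℂ)
    (ha : a + b + c + d = δ + 2 * s + (k + m) * δ)
    (hs : ∀ j : ℕ, j ≤ 2 * (k + m) → f (s + j * δ) ≠ 0)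
    (hb : sf f δ (δ + s - b) (k + m) ≠ 0) (hc : sf f δ (δ + s - c) (k + m) ≠ 0)
    (hd : sf f δ (δ + s - d) (k + m) ≠ 0) (hbcd : sf f δ (δ + s - b - c - d) (k + m) ≠ 0) :
    sf f δ δ (k + m) / (sf f δ δ k * sf f δ δ m)
      * (sf f δ a k * sf f δ (δ + s - b - c - d) m
        * sf f δ (δ - d - k * δ) k * sf f δ (δ + s - d + k * δ) m)
      / (sf f δ (s + k * δ) k * sf f δ (-s - (2 * k + m) * δ) m)
      * (sf f δ b k * sf f δ c k)
      * (sf f δ (b - s - (k + m) * δ) m * sf f δ (c - s - (k + m) * δ) m)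
    = (-1) ^ (k + m) * (sf f δ (δ + s - b) (k + m) * sf f δ (δ + s - c) (k + m)
        * sf f δ (δ + s - d) (k + m) * sf f δ (δ + s - b - c - d) (k + m)
        / sf f δ (δ + s) (k + m))
      * ((f (s + 2 * (k : ℂ) * δ) / f s) * (sf f δ s k / sf f δ δ k)
        * ∏ i, sf f δ (![a, b, c, d, -((k + m : ℕ) : ℂ) * δ] i) k
          / sf f δ (δ + s - ![a, b, c, d, -((k + m : ℕ) : ℂ) * δ] i) k) := by
  have r1 : sf f δ (δ - d - k * δ) k = (-1) ^ k * sf f δ d k :=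
    sf_reflect f hodd δ _ _ k (by ring)
  have r2 : sf f δ (b - s - (k + m) * δ) m = (-1) ^ m * sf f δ (δ + s - b + k * δ) m :=
    sf_reflect f hodd δ _ _ m (by ring)
  have r3 : sf f δ (c - s - (k + m) * δ) m = (-1) ^ m * sf f δ (δ + s - c + k * δ) m :=
    sf_reflect f hodd δ _ _ m (by ring)
  have r4 : sf f δ (-((k + m : ℕ) : ℂ) * δ) k = (-1) ^ k * sf f δ (δ + m * δ) k :=
    sf_reflect f hodd δ _ _ k (by push_cast; ring)
  have r5 : sf f δ (δ + s - a) k = (-1) ^ k * sf f δ (δ + s - b - c - d + m * δ) k :=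
    sf_reflect f hodd δ _ _ k (by linear_combination -ha)
  have r6 : sf f δ (-s - (2 * k + m) * δ) m = (-1) ^ m * sf f δ (δ + s + 2 * k * δ) m :=
    sf_reflect f hodd δ _ _ m (by ring)
  have p0 : sf f δ δ (k + m) = sf f δ δ m * sf f δ (δ + m * δ) k := by
    rw [add_comm, sf_add]
  have p1 : sf f δ (δ + s - b - c - d) (k + m)
      = sf f δ (δ + s - b - c - d) m * sf f δ (δ + s - b - c - d + m * δ) k := by
    rw [add_comm k m, sf_add]
  have hδk := sf_delta_ne hδ k
  have hδm := sf_delta_ne hδ m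
  have hs0 : f s ≠ 0 := by simpa using hs 0 (by omega)
  have n1 : sf f δ (δ + s) (k + m) ≠ 0 := sf_ne fun i hi => by
    have := hs (i + 1) (by omega)
    push_cast at this
    rwa [show δ + s + i * δ = s + (i + 1) * δ by ring]
  have n2 : sf f δ (δ + s + (k + m) * δ) k ≠ 0 := sf_ne fun i hi => by
    have := hs (i + 1 + (k + m)) (by omega)
    push_cast at this
    rwa [show δ + s + (k + m) * δ + i * δ = s + (i + 1 + (k + m)) * δ by ring]
  -- both sides are `[s]_{2k+m+1}`
  have master : sf f δ s k * sf f δ (s + k * δ) k * f (s + 2 * k * δ)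
        * sf f δ (δ + s + 2 * k * δ) m
      = f s * sf f δ (δ + s) (k + m) * sf f δ (δ + s + (k + m) * δ) k := by
    have h1 : sf f δ s (k + (k + (m + 1))) = sf f δ s k * sf f δ (s + k * δ) k *
        f (s + 2 * k * δ) * sf f δ (δ + s + 2 * k * δ) m := by
      rw [sf_add, sf_add, sf_succ_left, show s + k * δ + k * δ = s + 2 * k * δ by ring,
        show s + 2 * k * δ + δ = δ + s + 2 * k * δ by ring]
      ring
    have h2 : sf f δ s (k + m + k + 1)
        = f s * sf f δ (δ + s) (k + m) * sf f δ (δ + s + (k + m) * δ) k := by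
      rw [sf_succ_left, sf_add, add_comm s δ]
      push_cast
      ring
    rw [← h1, ← h2]
    congr 1
    ring
  have n3 : sf f δ (s + k * δ) k ≠ 0 := by
    intro h
    rw [h] at master
    simp_all
  have n4 : sf f δ (δ + s + 2 * k * δ) m ≠ 0 := by
    intro h
    rw [h] at master
    simp_all
  simp only [Fin.prod_univ_five, Matrix.cons_val]
  rw [show δ + s - -((k + m : ℕ) : ℂ) * δ = δ + s + (k + m) * δ by push_cast; ring]
  rw [p1] at hbcd ⊢
  rw [sf_add] at hb hc hd
  rw [r1, r2, r3, r4, r5, r6, p0, sf_add f δ (δ + s - b), sf_add f δ (δ + s - c),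
    sf_add f δ (δ + s - d)]
  obtain ⟨hb1, hb2⟩ := mul_ne_zero_iff.1 hb
  obtain ⟨hc1, hc2⟩ := mul_ne_zero_iff.1 hc
  obtain ⟨hd1, hd2⟩ := mul_ne_zero_iff.1 hd
  obtain ⟨ht1, ht2⟩ := mul_ne_zero_iff.1 hbcd
  have sk0 : ((-1 : ℂ) ^ k) ≠ 0 := by simp
  have sm0 : ((-1 : ℂ) ^ m) ≠ 0 := by simp
  rw [pow_add]
  clear r1 r2 r3 r4 r5 r6 p0 p1 hb hc hd hbcd hs hodd hδ
  generalize (-1 : ℂ) ^ k = ek at *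
  generalize (-1 : ℂ) ^ m = em at *
  generalize sf f δ (δ + s - b) k = x1 at *
  generalize sf f δ (δ + s - c) k = x2 at *
  generalize sf f δ (δ + s - d) k = x3 at *
  generalize sf f δ (δ + s - b + k * δ) m = x4 at *
  generalize sf f δ (δ + s - c + k * δ) m = x5 at *
  generalize sf f δ (δ + s - d + k * δ) m = x6 at *
  generalize sf f δ (δ + s - b - c - d) m = x7 at *
  generalize sf f δ (δ + s - b - c - d + m * δ) k = x8 at *
  generalize sf f δ (δ + m * δ) k = x9 at *
  generalize sf f δ δ k = x10 at *
  generalize sf f δ δ m = x11 at *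
  generalize sf f δ (δ + s) (k + m) = y1 at *
  generalize sf f δ (δ + s + (k + m) * δ) k = y2 at *
  generalize sf f δ (s + k * δ) k = y3 at *
  generalize sf f δ (δ + s + 2 * k * δ) m = y4 at *
  generalize f (s + 2 * k * δ) = y5 at *
  generalize sf f δ s k = y6 at *
  generalize sf f δ a k = y7 at *
  generalize sf f δ b k = y8 at *
  generalize sf f δ c k = y9 at *
  generalize sf f δ d k = y10 at *
  generalize f s = y11 at *
  field_simp
  linear_combination -(x9 * y7 * y10 * y8 * y9) * master

/-- The summation formula under the extra assumption that `[s+jδ] ≠ 0` for `0 ≤ j ≤ 2N`. -/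
lemma generic_sum {f : ℂ → ℂ} {δ : ℂ} (hodd : ∀ t : ℂ, f (-t) = -f t)
    (hRiem : ∀ x y u v : ℂ,
      f (x + y) * f (x - y) * f (u + v) * f (u - v) =
        f (x + u) * f (x - u) * f (y + v) * f (y - v)
          - f (x + v) * f (x - v) * f (y + u) * f (y - u))
    (hδ : ∀ k : ℤ, k ≠ 0 → f ((k : ℂ) * δ) ≠ 0) (N : ℕ) (s a b c d : ℂ)
    (ha : a + b + c + d = δ + 2 * s + N * δ)
    (hs : ∀ j : ℕ, j ≤ 2 * N → f (s + j * δ) ≠ 0)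
    (hb : sf f δ (δ + s - b) N ≠ 0) (hc : sf f δ (δ + s - c) N ≠ 0)
    (hd : sf f δ (δ + s - d) N ≠ 0) (hbcd : sf f δ (δ + s - b - c - d) N ≠ 0) :
    ∑ k ∈ range (N + 1), (f (s + 2 * (k : ℂ) * δ) / f s) * (sf f δ s k / sf f δ δ k)
        * ∏ i, sf f δ (![a, b, c, d, -(N : ℂ) * δ] i) k
          / sf f δ (δ + s - ![a, b, c, d, -(N : ℂ) * δ] i) k =
      sf f δ (δ + s) N * sf f δ (δ + s - b - c) N * sf f δ (δ + s - b - d) N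
          * sf f δ (δ + s - c - d) N
        / (sf f δ (δ + s - b) N * sf f δ (δ + s - c) N * sf f δ (δ + s - d) N
          * sf f δ (δ + s - b - c - d) N) := by
  have hg : ∀ j : ℤ, |j| ≤ N → f ((b + c) / 2 - ((b + c) / 2 - s - N * δ) + j * δ) ≠ 0 := by
    intro j hj
    rw [abs_le] at hj
    obtain ⟨i, hi⟩ := Int.eq_ofNat_of_zero_le (show 0 ≤ j + N by omega)
    have := hs i (by omega)
    rw [show (b + c) / 2 - ((b + c) / 2 - s - N * δ) + j * δ = s + ((j + N : ℤ) : ℂ) * δ by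
      push_cast; ring, hi]
    exact_mod_cast this
  have n1 : sf f δ (δ + s) N ≠ 0 := sf_ne fun i hi => by
    have := hs (i + 1) (by omega)
    push_cast at this
    rwa [show δ + s + i * δ = s + (i + 1) * δ by ring]
  have E := expansion hodd hRiem hδ ((b + c) / 2) ((b + c) / 2 - s - N * δ)
    (δ + s - (b + c) / 2 - d) ((b - c) / 2) N hg
  rw [sf_reflect f hodd δ _ (δ + s - b - c) N (by ring),
    show δ + s - (b + c) / 2 - d + (b - c) / 2 = δ + s - c - d by ring,
    show δ + s - (b + c) / 2 - d - (b - c) / 2 = δ + s - b - d by ring,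
    Finset.sum_congr rfl (g := fun p : ℕ × ℕ =>
      (-1) ^ N * (sf f δ (δ + s - b) N * sf f δ (δ + s - c) N
        * sf f δ (δ + s - d) N * sf f δ (δ + s - b - c - d) N / sf f δ (δ + s) N)
      * ((f (s + 2 * (p.1 : ℂ) * δ) / f s) * (sf f δ s p.1 / sf f δ δ p.1)
        * ∏ i, sf f δ (![a, b, c, d, -(N : ℂ) * δ] i) p.1
          / sf f δ (δ + s - ![a, b, c, d, -(N : ℂ) * δ] i) p.1)) ?_,
    ← Finset.mul_sum, Finset.Nat.sum_antidiagonal_eq_sum_range_succ_mk] at E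
  · have hsg : (-1 : ℂ) ^ N ≠ 0 := by simp
    dsimp only at E
    rw [eq_div_iff (by simp only [ne_eq, mul_eq_zero, not_or]; tauto)]
    rw [mul_assoc, mul_assoc, mul_assoc] at E
    have E' := mul_left_cancel₀ hsg E
    rw [div_mul_eq_mul_div, eq_div_iff n1] at E'
    linear_combination -E'
  · rintro ⟨k, m⟩ hp
    rw [HasAntidiagonal.mem_antidiagonal] at hp
    dsimp only at hp ⊢
    subst hp
    push_cast at ha
    rw [← term_eq hodd hδ k m s a b c d ha hs hb hc hd hbcd, expCoeff]
    push_cast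
    rw [show δ + s - (b + c) / 2 - d - ((b + c) / 2 - s - (k + m) * δ) = a by
        linear_combination -ha,
      show δ + s - (b + c) / 2 - d - (b + c) / 2 = δ + s - b - c - d by ring,
      show δ + s - (b + c) / 2 - d + ((b + c) / 2 - s - (k + m) * δ) + m * δ
        = δ - d - k * δ by ring,
      show δ + s - (b + c) / 2 - d + (b + c) / 2 + k * δ = δ + s - d + k * δ by ring,
      show (b + c) / 2 - ((b + c) / 2 - s - (k + m) * δ) - m * δ = s + k * δ by ring,
      show (b + c) / 2 - s - (k + m) * δ - (b + c) / 2 - k * δ = -s - (2 * k + m) * δ by ring,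
      show (b + c) / 2 + (b - c) / 2 = b by ring,
      show (b + c) / 2 - (b - c) / 2 = c by ring,
      show (b + c) / 2 - s - (k + m) * δ + (b - c) / 2 = b - s - (k + m) * δ by ring,
      show (b + c) / 2 - s - (k + m) * δ - (b - c) / 2 = c - s - (k + m) * δ by ring]

/-! ### Passage to arbitrary `s` -/

lemma continuous_sf {f : ℂ → ℂ} (hc : Continuous f) (δ : ℂ) {g : ℂ → ℂ} (hg : Continuous g)
    (k : ℕ) : Continuous fun t => sf f δ (g t) k := by
  unfold sf
  fun_prop

/-- The zeros of the bracket are isolated. -/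
lemma eventually_ne_zero {f : ℂ → ℂ} (hf : f ≠ 0) (hdiff : Differentiable ℂ f) (s w : ℂ) :
    ∀ᶠ t in nhdsWithin s {s}ᶜ, f (t + w) ≠ 0 := by
  have hd : Differentiable ℂ fun t => f (t + w) := by fun_prop
  rcases (hd.analyticAt s).eventually_eq_zero_or_eventually_ne_zero with h | h
  · exfalso
    have h0 := AnalyticOnNhd.eqOn_zero_of_preconnected_of_eventuallyEq_zero
      (fun x _ => hd.analyticAt x) isPreconnected_univ (Set.mem_univ s) h
    apply hf
    funext t
    simpa using h0 (Set.mem_univ (t - w))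
  · exact h

/-- **Frenkel–Turaev summation formula** for terminating balanced `₈E₇`. -/
theorem frenkel_turaev_summation
    (f : ℂ → ℂ) (hf : f ≠ 0) (hodd : ∀ t : ℂ, f (-t) = -f t) (hdiff : Differentiable ℂ f)
    (hRiem : ∀ x y u v : ℂ,
      f (x + y) * f (x - y) * f (u + v) * f (u - v) =
        f (x + u) * f (x - u) * f (y + v) * f (y - v)
          - f (x + v) * f (x - v) * f (y + u) * f (y - u))
    (δ : ℂ) (hδ : ∀ k : ℤ, k ≠ 0 → f ((k : ℂ) * δ) ≠ 0)
    (N : ℕ) (s a b c d e : ℂ)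
    (hbal : a + b + c + d + e = δ + 2 * s) (he : e = -(N : ℂ) * δ)
    (hs : f s ≠ 0)
    (hden : ∀ (i : Fin 5) (l : ℕ), l < N →
      f (δ + s - ![a, b, c, d, e] i + (l : ℂ) * δ) ≠ 0)
    (hbcd : ∀ l : ℕ, l < N → f (δ + s - b - c - d + (l : ℂ) * δ) ≠ 0) :
    E1 f δ s ![a, b, c, d, e] =
      sf f δ (δ + s) N * sf f δ (δ + s - b - c) N * sf f δ (δ + s - b - d) N
          * sf f δ (δ + s - c - d) N
        / (sf f δ (δ + s - b) N * sf f δ (δ + s - c) N * sf f δ (δ + s - d) N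
          * sf f δ (δ + s - b - c - d) N) := by
  have hcont := hdiff.continuous
  subst he
  -- the tail of the series vanishes because of the factor `[-Nδ]_k`
  have hE : E1 f δ s ![a, b, c, d, -(N : ℂ) * δ] =
      ∑ k ∈ range (N + 1), (f (s + 2 * (k : ℂ) * δ) / f s) * (sf f δ s k / sf f δ δ k)
        * ∏ i, sf f δ (![a, b, c, d, -(N : ℂ) * δ] i) k
          / sf f δ (δ + s - ![a, b, c, d, -(N : ℂ) * δ] i) k := by
    refine tsum_eq_sum fun k hk => ?_
    have hk' : N < k := by simpa using hk
    have h0 : f 0 = 0 := by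
      have := hodd 0
      rw [neg_zero] at this
      exact self_eq_neg.1 this
    have : sf f δ (-(N : ℂ) * δ) k = 0 :=
      Finset.prod_eq_zero (Finset.mem_range.2 hk') (by simpa using h0)
    rw [Finset.prod_eq_zero (Finset.mem_univ (4 : Fin 5)), mul_zero]
    change sf f δ (-(N : ℂ) * δ) k / _ = 0
    rw [this, zero_div]
  rw [hE]
  have hN : ∀ (i : Fin 5) (k : ℕ), k ≤ N →
      sf f δ (δ + s - ![a, b, c, d, -(N : ℂ) * δ] i) k ≠ 0 := fun i k hk =>
    sf_ne fun l hl => hden i l (by omega)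
  have hT : sf f δ (δ + s - b - c - d) N ≠ 0 := sf_ne hbcd
  -- `b, c, d` and `N` are fixed, `s` varies and `a` is determined by the balancing condition
  obtain ⟨a', ha'⟩ : ∃ a' : ℂ → ℂ, a' = fun t => a + 2 * (t - s) := ⟨_, rfl⟩
  have hca : Continuous a' := by rw [ha']; fun_prop
  have has : a' s = a := by simp [ha']
  let L : ℂ → ℂ := fun t =>
    ∑ k ∈ range (N + 1), (f (t + 2 * (k : ℂ) * δ) / f t) * (sf f δ t k / sf f δ δ k)
        * ∏ i, sf f δ (![a' t, b, c, d, -(N : ℂ) * δ] i) k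
          / sf f δ (δ + t - ![a' t, b, c, d, -(N : ℂ) * δ] i) k
  let R : ℂ → ℂ := fun t =>
    sf f δ (δ + t) N * sf f δ (δ + t - b - c) N * sf f δ (δ + t - b - d) N
          * sf f δ (δ + t - c - d) N
        / (sf f δ (δ + t - b) N * sf f δ (δ + t - c) N * sf f δ (δ + t - d) N
          * sf f δ (δ + t - b - c - d) N)
  have hv : ∀ i : Fin 5, Continuous fun t => ![a' t, b, c, d, -(N : ℂ) * δ] i := by
    intro i
    fin_cases i
    · exact hca
    all_goals exact continuous_const
  have hL : ContinuousAt L s := by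
    refine tendsto_finsetSum _ fun k hk => ?_
    have hk' : k ≤ N := Nat.lt_succ_iff.1 (Finset.mem_range.1 hk)
    refine ContinuousAt.mul (ContinuousAt.mul ?_ ?_) ?_
    · exact ContinuousAt.div (by fun_prop) (by fun_prop) hs
    · exact ContinuousAt.div (continuous_sf hcont δ continuous_id k).continuousAt
        continuousAt_const (sf_delta_ne hδ k)
    · refine tendsto_finsetProd _ fun i _ => ?_
      refine ContinuousAt.div (continuous_sf hcont δ (hv i) k).continuousAt
        (continuous_sf hcont δ (by have := hv i; fun_prop) k).continuousAt ?_
      rw [has]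
      exact hN i k hk'
  have c1 := continuous_sf hcont δ (g := fun t => δ + t - b) (by fun_prop) N
  have c2 := continuous_sf hcont δ (g := fun t => δ + t - c) (by fun_prop) N
  have c3 := continuous_sf hcont δ (g := fun t => δ + t - d) (by fun_prop) N
  have c4 := continuous_sf hcont δ (g := fun t => δ + t - b - c - d) (by fun_prop) N
  have c5 := continuous_sf hcont δ (g := fun t => δ + t) (by fun_prop) N
  have c6 := continuous_sf hcont δ (g := fun t => δ + t - b - c) (by fun_prop) N
  have c7 := continuous_sf hcont δ (g := fun t => δ + t - b - d) (by fun_prop) N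
  have c8 := continuous_sf hcont δ (g := fun t => δ + t - c - d) (by fun_prop) N
  have n1 : sf f δ (δ + s - b) N ≠ 0 := hN 1 N le_rfl
  have n2 : sf f δ (δ + s - c) N ≠ 0 := hN 2 N le_rfl
  have n3 : sf f δ (δ + s - d) N ≠ 0 := hN 3 N le_rfl
  have hR : ContinuousAt R s :=
    ContinuousAt.div (by fun_prop) (by fun_prop)
      (mul_ne_zero (mul_ne_zero (mul_ne_zero n1 n2) n3) hT)
  have hLR : ∀ᶠ t in nhdsWithin s {s}ᶜ, L t = R t := by
    have hgen : ∀ᶠ t in nhdsWithin s {s}ᶜ, ∀ j ∈ range (2 * N + 1), f (t + j * δ) ≠ 0 :=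
      (Filter.eventually_all_finset _).2 fun j _ => eventually_ne_zero hf hdiff s _
    filter_upwards [hgen, nhdsWithin_le_nhds (c1.continuousAt.eventually_ne n1),
      nhdsWithin_le_nhds (c2.continuousAt.eventually_ne n2),
      nhdsWithin_le_nhds (c3.continuousAt.eventually_ne n3),
      nhdsWithin_le_nhds (c4.continuousAt.eventually_ne hT)] with t h0 h1 h2 h3 h4
    exact generic_sum hodd hRiem hδ N t (a' t) b c d
      (by rw [ha']; linear_combination hbal)
      (fun j hj => h0 j (Finset.mem_range.2 (by omega))) h1 h2 h3 h4
  have hlim : L s = R s :=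
    tendsto_nhds_unique_of_eventuallyEq (hL.mono_left nhdsWithin_le_nhds)
      (hR.mono_left nhdsWithin_le_nhds) hLR
  simpa only [L, R, has] using hlim
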